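/- arXiv:1301.6819 — 2 statements merged into one kernel-verified Lean document; each statement's English description precedes it below -/
import Mathlib

section
/- Let A be a Hopf algebra over a field K with bijective antipode S. Define the linear operator T on A ⊗ A by T(a ⊗ b) = b₍₂₎ ⊗ a S(b₍₁₎) b₍₃₎ (Sweedler notation). Then T satisfies the braid equation: (T ⊗ id) ∘ (id ⊗ T) ∘ (T ⊗ id) = (id ⊗ T) ∘ (T ⊗ id) ∘ (id ⊗ T) as linear maps A ⊗ A ⊗ A → A ⊗ A ⊗ A. -/
/-!
The antipode is removed from the braid equation by a change of variables. Let
`W (a ⊗ b) = a b₍₁₎ ⊗ b₍₂₎`; it is surjective (`Wmap_surjective`), and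
`T (W (a ⊗ b)) = b₍₁₎ ⊗ a b₍₂₎` (`Tmap_comul`). Hence `W₁₂ W₂₃` is surjective, and it suffices to
compare the two sides on its values `a b₍₁₎ c₍₁₎ ⊗ b₍₂₎ c₍₂₎ ⊗ c₍₃₎`. There each application of
`T` only moves a factor standing to the left of the iterated coproduct of `c` (or of `b c`), and
both sides give `c₍₁₎ ⊗ b₍₁₎ c₍₂₎ ⊗ a b₍₂₎ c₍₃₎` (`braid_on_galois`).
-/

/-!
STATEMENT 0: For a Hopf algebra `A` over a field `K` with bijective antipode `S`,
the operator `T` on `A ⊗ A` given by `T(a ⊗ b) = b₍₂₎ ⊗ a S(b₍₁₎) b₍₃₎`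
satisfies the braid equation.
-/

open TensorProduct LinearMap

section

variable (K A : Type*) [Field K] [Ring A] [HopfAlgebra K A]

/-- The antipode as a linear map. -/
noncomputable def antipodeL : A →ₗ[K] A := HopfAlgebra.antipode (R := K)

/-- Iterated comultiplication `b ↦ b₍₁₎ ⊗ (b₍₂₎ ⊗ b₍₃₎)`. -/
noncomputable def comul3 : A →ₗ[K] A ⊗[K] (A ⊗[K] A) :=
  (lTensor A (Coalgebra.comul (R := K))) ∘ₗ Coalgebra.comul (R := K)

/-- The operator `T(a ⊗ b) = b₍₂₎ ⊗ a S(b₍₁₎) b₍₃₎`. -/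
noncomputable def Tmap : A ⊗[K] A →ₗ[K] A ⊗[K] A :=
  lTensor A (mul' K A)
  ∘ₗ (TensorProduct.assoc K A A A).toLinearMap
  ∘ₗ rTensor A (TensorProduct.comm K A A).toLinearMap
  ∘ₗ (TensorProduct.assoc K A A A).symm.toLinearMap
  ∘ₗ rTensor (A ⊗[K] A) (mul' K A)
  ∘ₗ (TensorProduct.assoc K A A (A ⊗[K] A)).symm.toLinearMap
  ∘ₗ lTensor A (rTensor (A ⊗[K] A) (antipodeL K A))
  ∘ₗ lTensor A (comul3 K A)

/-- `T ⊗ id` acting on `(A ⊗ A) ⊗ A`. -/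
noncomputable def Tmap12 : (A ⊗[K] A) ⊗[K] A →ₗ[K] (A ⊗[K] A) ⊗[K] A :=
  rTensor A (Tmap K A)

/-- `id ⊗ T` acting on `(A ⊗ A) ⊗ A`. -/
noncomputable def Tmap23 : (A ⊗[K] A) ⊗[K] A →ₗ[K] (A ⊗[K] A) ⊗[K] A :=
  (TensorProduct.assoc K A A A).symm.toLinearMap
  ∘ₗ lTensor A (Tmap K A)
  ∘ₗ (TensorProduct.assoc K A A A).toLinearMap

open Coalgebra in
/-- Defining formula for `T`, with the last two Sweedler legs of `b` kept together as a
comultiplication: `T (a ⊗ b) = (1 ⊗ a S(b₍₁₎)) Δ(b₍₂₎)`. -/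
lemma Tmap_tmul (a b : A) {ι : Type*} (r : Repr K b ι) :
    Tmap K A (a ⊗ₜ b) = ∑ i ∈ r.index,
      ((1 : A) ⊗ₜ[K] (a * antipodeL K A (r.left i))) * comul (R := K) (r.right i) := by
  simp only [Tmap, comul3, LinearMap.comp_apply, LinearMap.lTensor_tmul, ← r.eq, map_sum,
    TensorProduct.tmul_sum]
  refine Finset.sum_congr rfl fun i _ => ?_
  rw [← (ℛ K (r.right i)).eq]
  simp [TensorProduct.tmul_sum, Finset.mul_sum]

/-- The canonical (Galois) map `W (a ⊗ b) = a b₍₁₎ ⊗ b₍₂₎`. -/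
noncomputable def Wmap : A ⊗[K] A →ₗ[K] A ⊗[K] A :=
  rTensor A (mul' K A) ∘ₗ (TensorProduct.assoc K A A A).symm.toLinearMap
    ∘ₗ lTensor A (Coalgebra.comul (R := K))

open Coalgebra in
lemma Wmap_tmul (a b : A) : Wmap K A (a ⊗ₜ b) = (a ⊗ₜ[K] (1 : A)) * comul (R := K) b := by
  simp only [Wmap, LinearMap.comp_apply, LinearMap.lTensor_tmul]
  rw [← (ℛ K b).eq]
  simp [TensorProduct.tmul_sum, Finset.mul_sum]

open Coalgebra in
/-- A preimage of `a ⊗ b` under `W` is `a S(b₍₁₎) ⊗ b₍₂₎`, because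
`a S(b₍₁₎) b₍₂₎ ⊗ b₍₃₎ = a ⊗ b`. -/
lemma Wmap_surjective : Function.Surjective (Wmap K A) := by
  rw [← LinearMap.range_eq_top, eq_top_iff, ← TensorProduct.span_tmul_eq_top, Submodule.span_le]
  rintro _ ⟨a, b, rfl⟩
  refine ⟨∑ i ∈ (ℛ K b).index,
    (a * antipodeL K A ((ℛ K b).left i)) ⊗ₜ[K] (ℛ K b).right i, ?_⟩
  have h := sum_tmul_tmul_eq (ℛ K b) (fun i => ℛ K ((ℛ K b).left i))
    (fun i => ℛ K ((ℛ K b).right i))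
  -- the linear map `x ⊗ (y ⊗ z) ↦ a S(x) y ⊗ z`
  have h' := congrArg (rTensor A (mul' K A ∘ₗ map (mulLeft K a ∘ₗ antipodeL K A) LinearMap.id)
    ∘ₗ (TensorProduct.assoc K A A A).symm.toLinearMap) h
  simp only [map_sum, LinearMap.comp_apply, LinearEquiv.coe_coe, TensorProduct.assoc_symm_tmul,
    rTensor_tmul, map_tmul, mulLeft_apply, LinearMap.id_apply, mul'_apply] at h'
  simp only [map_sum, Wmap_tmul]
  trans ∑ i ∈ (ℛ K b).index, ∑ j ∈ (ℛ K ((ℛ K b).right i)).index,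
      (a * antipodeL K A ((ℛ K b).left i) * (ℛ K ((ℛ K b).right i)).left j) ⊗ₜ[K]
        (ℛ K ((ℛ K b).right i)).right j
  · refine Finset.sum_congr rfl fun i _ => ?_
    conv_lhs => rw [← (ℛ K ((ℛ K b).right i)).eq]
    simp [Finset.mul_sum]
  rw [← h']
  simp only [mul_assoc, ← Finset.mul_sum, ← TensorProduct.sum_tmul, antipodeL,
    HopfAlgebra.sum_antipode_mul_eq_smul, mul_smul_comm, mul_one, TensorProduct.smul_tmul]
  rw [← TensorProduct.tmul_sum, sum_counit_smul]

open Coalgebra in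
/-- `T` untwists `W`: `T (a b₍₁₎ ⊗ b₍₂₎) = b₍₁₎ ⊗ a b₍₂₎`. The antipode cancels, since the
left side is `(1 ⊗ a b₍₁₎ S(b₍₂₎)) Δ(b₍₃₎)`. -/
lemma Tmap_comul (a b : A) :
    Tmap K A ((a ⊗ₜ[K] (1 : A)) * comul (R := K) b) = ((1 : A) ⊗ₜ[K] a) * comul (R := K) b := by
  have h := sum_tmul_tmul_eq (ℛ K b) (fun i => ℛ K ((ℛ K b).left i))
    (fun i => ℛ K ((ℛ K b).right i))
  -- the linear map `x ⊗ (y ⊗ z) ↦ (1 ⊗ a x S(y)) Δ(z)`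
  have h' := congrArg (mul' K (A ⊗[K] A) ∘ₗ map
    (TensorProduct.mk K A A 1 ∘ₗ mul' K A ∘ₗ map (mulLeft K a) (antipodeL K A))
      (comul (R := K)) ∘ₗ (TensorProduct.assoc K A A A).symm.toLinearMap) h
  simp only [map_sum, LinearMap.comp_apply, LinearEquiv.coe_coe, TensorProduct.assoc_symm_tmul,
    map_tmul, mulLeft_apply, mul'_apply, TensorProduct.mk_apply] at h'
  conv_lhs => rw [← (ℛ K b).eq]
  simp only [Finset.mul_sum, map_sum, Algebra.TensorProduct.tmul_mul_tmul, one_mul]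
  simp only [fun i => Tmap_tmul K A (a * (ℛ K b).left i) _ (ℛ K ((ℛ K b).right i))]
  rw [← h']
  simp only [mul_assoc, ← Finset.mul_sum, ← Finset.sum_mul, ← TensorProduct.tmul_sum, antipodeL,
    HopfAlgebra.sum_mul_antipode_eq_smul, mul_smul_comm, mul_one, TensorProduct.tmul_smul,
    smul_mul_assoc]
  simp only [← mul_smul_comm, ← map_smul, ← Finset.mul_sum, ← map_sum, sum_counit_smul]

open Coalgebra in
lemma Tmap12_comul (a x : A) (t : A ⊗[K] A) :
    Tmap12 K A (((a ⊗ₜ[K] (1 : A)) ⊗ₜ[K] x) * rTensor A (comul (R := K)) t) =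
      (((1 : A) ⊗ₜ[K] a) ⊗ₜ[K] x) * rTensor A (comul (R := K)) t := by
  induction t with
  | zero => simp
  | add s t hs ht => simp only [map_add, mul_add, hs, ht]
  | tmul u v =>
    simp only [rTensor_tmul, Algebra.TensorProduct.tmul_mul_tmul, Tmap12, Tmap_comul]

open Coalgebra in
lemma Tmap23_comul (a x : A) (t : A ⊗[K] A) :
    Tmap23 K A (((x ⊗ₜ[K] a) ⊗ₜ[K] (1 : A)) *
        (TensorProduct.assoc K A A A).symm (lTensor A (comul (R := K)) t)) =
      ((x ⊗ₜ[K] (1 : A)) ⊗ₜ[K] a) *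
        (TensorProduct.assoc K A A A).symm (lTensor A (comul (R := K)) t) := by
  have key : ∀ (p q r : A) (s : A ⊗[K] (A ⊗[K] A)),
      ((p ⊗ₜ[K] q) ⊗ₜ[K] r) * (TensorProduct.assoc K A A A).symm s =
        (TensorProduct.assoc K A A A).symm ((p ⊗ₜ[K] (q ⊗ₜ[K] r)) * s) := fun p q r s =>
    ((Algebra.TensorProduct.assoc K K K A A A).symm.map_mul (p ⊗ₜ[K] (q ⊗ₜ[K] r)) s).symm
  rw [key, key]
  induction t with
  | zero => simp
  | add s t hs ht => simp only [map_add, mul_add, hs, ht]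
  | tmul u v =>
    simp only [lTensor_tmul, Algebra.TensorProduct.tmul_mul_tmul, Tmap23, LinearMap.comp_apply,
      LinearEquiv.coe_coe, LinearEquiv.apply_symm_apply, Tmap_comul]

open Coalgebra in
/-- Both sides of the braid equation send `a b₍₁₎ c₍₁₎ ⊗ b₍₂₎ c₍₂₎ ⊗ c₍₃₎` to
`c₍₁₎ ⊗ b₍₁₎ c₍₂₎ ⊗ a b₍₂₎ c₍₃₎`. -/
lemma braid_on_galois (a b c : A) :
    let X := ((a ⊗ₜ[K] (1 : A)) ⊗ₜ[K] (1 : A)) *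
      rTensor A (comul (R := K)) ((b ⊗ₜ[K] (1 : A)) * comul (R := K) c)
    Tmap12 K A (Tmap23 K A (Tmap12 K A X)) = Tmap23 K A (Tmap12 K A (Tmap23 K A X)) := by
  intro X
  have hmul : ∀ s t : A ⊗[K] A, rTensor A (comul (R := K)) (s * t) =
      rTensor A (comul (R := K)) s * rTensor A (comul (R := K)) t :=
    (Algebra.TensorProduct.map (Bialgebra.comulAlgHom K A) (AlgHom.id K A)).map_mul
  have hmul' : ∀ s t : A ⊗[K] A,
      (TensorProduct.assoc K A A A).symm (lTensor A (comul (R := K)) (s * t)) =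
      (TensorProduct.assoc K A A A).symm (lTensor A (comul (R := K)) s) *
      (TensorProduct.assoc K A A A).symm (lTensor A (comul (R := K)) t) :=
    ((Algebra.TensorProduct.assoc K K K A A A).symm.toAlgHom.comp
      (Algebra.TensorProduct.map (AlgHom.id K A) (Bialgebra.comulAlgHom K A))).map_mul
  set D := rTensor A (comul (R := K)) (comul (R := K) c) with hD
  have hD' : (TensorProduct.assoc K A A A).symm
      (lTensor A (comul (R := K)) (comul (R := K) c)) = D := coassoc_symm_apply c
  have h12 : ∀ p x : A, Tmap12 K A (((p ⊗ₜ[K] (1 : A)) ⊗ₜ[K] x) * D) =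
      (((1 : A) ⊗ₜ[K] p) ⊗ₜ[K] x) * D := fun p x => Tmap12_comul K A p x _
  have h23 : ∀ p x : A, Tmap23 K A (((x ⊗ₜ[K] p) ⊗ₜ[K] (1 : A)) * D) =
      ((x ⊗ₜ[K] (1 : A)) ⊗ₜ[K] p) * D := fun p x => by
    rw [← hD']; exact Tmap23_comul K A p x _
  -- the last step of the right-hand side uses `(1 ⊗ Δ(b)) D = (id ⊗ Δ)((1 ⊗ b) Δ(c))`
  have hlast : Tmap23 K A (∑ i ∈ (ℛ K b).index,
      (((1 : A) ⊗ₜ[K] (a * (ℛ K b).left i)) ⊗ₜ[K] (ℛ K b).right i) * D) =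
      ∑ i ∈ (ℛ K b).index,
      (((1 : A) ⊗ₜ[K] (ℛ K b).left i) ⊗ₜ[K] (a * (ℛ K b).right i)) * D := by
    have h := Tmap23_comul K A a 1 (((1 : A) ⊗ₜ[K] b) * comul (R := K) c)
    rw [hmul', hD', lTensor_tmul, ← (ℛ K b).eq] at h
    simpa only [TensorProduct.tmul_sum, map_sum, TensorProduct.assoc_symm_tmul, Finset.mul_sum,
      Finset.sum_mul, ← mul_assoc, Algebra.TensorProduct.tmul_mul_tmul, one_mul, mul_one] using h
  have h1 : Tmap12 K A X = ∑ i ∈ (ℛ K b).index,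
      (((ℛ K b).left i ⊗ₜ[K] (a * (ℛ K b).right i)) ⊗ₜ[K] (1 : A)) * D := by
    rw [Tmap12_comul, hmul, ← hD, rTensor_tmul, ← (ℛ K b).eq]
    simp only [TensorProduct.sum_tmul, Finset.mul_sum,
      Finset.sum_mul, ← mul_assoc, Algebra.TensorProduct.tmul_mul_tmul, one_mul, mul_one]
  have h2 : X = ∑ i ∈ (ℛ K b).index,
      (((a * (ℛ K b).left i) ⊗ₜ[K] (ℛ K b).right i) ⊗ₜ[K] (1 : A)) * D := by
    simp only [X]
    rw [hmul, ← hD, rTensor_tmul, ← (ℛ K b).eq]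
    simp only [TensorProduct.sum_tmul, Finset.mul_sum,
      Finset.sum_mul, ← mul_assoc, Algebra.TensorProduct.tmul_mul_tmul, one_mul, mul_one]
  rw [h1, h2]
  simp only [map_sum, h23, h12]
  rw [← map_sum, hlast]

/-- The braid equation `(T ⊗ id)(id ⊗ T)(T ⊗ id) = (id ⊗ T)(T ⊗ id)(id ⊗ T)`
for `T(a ⊗ b) = b₍₂₎ ⊗ a S(b₍₁₎) b₍₃₎`, assuming the antipode is bijective. -/
theorem braid_equation_T
    (hS : Function.Bijective (antipodeL K A)) :
    Tmap12 K A ∘ₗ Tmap23 K A ∘ₗ Tmap12 K A = Tmap23 K A ∘ₗ Tmap12 K A ∘ₗ Tmap23 K A := by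
  have hsurj : Function.Surjective (rTensor A (Wmap K A) ∘ₗ
      (TensorProduct.assoc K A A A).symm.toLinearMap ∘ₗ lTensor A (Wmap K A)) :=
    (rTensor_surjective A (Wmap_surjective K A)).comp
      ((TensorProduct.assoc K A A A).symm.surjective.comp
        (lTensor_surjective A (Wmap_surjective K A)))
  rw [← LinearMap.cancel_right hsurj]
  refine TensorProduct.ext' fun a t => ?_
  induction t with
  | zero => simp
  | add s t hs ht => simp only [TensorProduct.tmul_add, map_add, hs, ht]
  | tmul b c =>
    have hW : rTensor A (Wmap K A) ((TensorProduct.assoc K A A A).symm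
        (lTensor A (Wmap K A) (a ⊗ₜ[K] (b ⊗ₜ[K] c)))) =
        ((a ⊗ₜ[K] (1 : A)) ⊗ₜ[K] (1 : A)) * rTensor A (Coalgebra.comul (R := K))
          ((b ⊗ₜ[K] (1 : A)) * Coalgebra.comul (R := K) c) := by
      rw [lTensor_tmul, Wmap_tmul]
      induction (b ⊗ₜ[K] (1 : A)) * Coalgebra.comul (R := K) c with
      | zero => simp
      | add s t hs ht => simp only [TensorProduct.tmul_add, map_add, mul_add, hs, ht]
      | tmul u v => simp [Wmap_tmul]
    simp only [LinearMap.comp_apply, LinearEquiv.coe_coe, hW]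
    exact braid_on_galois K A a b c

end
end

section
/- Let A be a Hopf algebra over a field K with bijective antipode S. Define the linear operator T' on A ⊗ A by T'(a ⊗ b) = b₍₁₎ ⊗ S(b₍₂₎) a b₍₃₎ (Sweedler notation). Then T' satisfies the braid equation: (T' ⊗ id) ∘ (id ⊗ T') ∘ (T' ⊗ id) = (id ⊗ T') ∘ (T' ⊗ id) ∘ (id ⊗ T') as linear maps A ⊗ A ⊗ A → A ⊗ A ⊗ A. -/
/-!
Write `a ◁ b = S(b₍₁₎) a b₍₂₎` for the right adjoint action, so that `T'(a ⊗ b) = b₍₁₎ ⊗ (a ◁ b₍₂₎)`.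
By coassociativity the two sides of the braid equation, evaluated at `a ⊗ b ⊗ c`, are
`c₍₁₎ ⊗ (b₍₁₎ ◁ c₍₂₎) ⊗ ((a ◁ b₍₂₎) ◁ c₍₃₎)` and
`c₍₁₎ ⊗ (b ◁ c₍₃₎)₍₁₎ ⊗ ((a ◁ c₍₂₎) ◁ (b ◁ c₍₃₎)₍₂₎)`.
Since `◁` is an action of the algebra `A` (`adj_adj`), they agree as soon as
`(b₍₁₎ ◁ c₍₁₎) ⊗ b₍₂₎ c₍₂₎ = (b ◁ c₍₂₎)₍₁₎ ⊗ c₍₁₎ (b ◁ c₍₂₎)₍₂₎`,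
which is the Yetter–Drinfeld compatibility of `◁` with `Δ` (`yetterDrinfeld`).

This compatibility is a computation in the convolution algebra `Hom(A, A ⊗ A)`. Let `ι₁`, `ι₂` be
the two inclusions `A → A ⊗ A`. There `Δ = ι₁ * ι₂`, the inverse of `Δ` is `Δ ∘ S`, and the inverse
of `ι₁` is `ι₁ ∘ S`, so `ι₂ * (Δ ∘ S) = ι₁ ∘ S` (`incl₂_mul_comul_antipode`); both sides of the
compatibility are obtained by multiplying this on the right by `c ↦ Δ(b) Δ(c)`.
-/

/-!
STATEMENT 1: For a Hopf algebra `A` over a field `K` with bijective antipode `S`,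
the operator `T'` on `A ⊗ A` given by `T'(a ⊗ b) = b₍₁₎ ⊗ S(b₍₂₎) a b₍₃₎`
satisfies the braid equation.
-/

open TensorProduct LinearMap

section

variable (K A : Type*) [Field K] [Ring A] [HopfAlgebra K A]

/-- The auxiliary map `a ⊗ (c ⊗ b₃) ↦ c * a * b₃`. -/
noncomputable def mulMid : A ⊗[K] (A ⊗[K] A) →ₗ[K] A :=
  mul' K A
  ∘ₗ rTensor A (mul' K A)
  ∘ₗ rTensor A (TensorProduct.comm K A A).toLinearMap
  ∘ₗ (TensorProduct.assoc K A A A).symm.toLinearMap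

/-- The operator `T'(a ⊗ b) = b₍₁₎ ⊗ S(b₍₂₎) a b₍₃₎`. -/
noncomputable def Tmap' : A ⊗[K] A →ₗ[K] A ⊗[K] A :=
  lTensor A (mulMid K A)
  ∘ₗ (TensorProduct.assoc K A A (A ⊗[K] A)).toLinearMap
  ∘ₗ rTensor (A ⊗[K] A) (TensorProduct.comm K A A).toLinearMap
  ∘ₗ (TensorProduct.assoc K A A (A ⊗[K] A)).symm.toLinearMap
  ∘ₗ lTensor A (lTensor A (rTensor A (antipodeL K A)))
  ∘ₗ lTensor A (comul3 K A)

/-- `T' ⊗ id` acting on `(A ⊗ A) ⊗ A`. -/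
noncomputable def Tmap'12 : (A ⊗[K] A) ⊗[K] A →ₗ[K] (A ⊗[K] A) ⊗[K] A :=
  rTensor A (Tmap' K A)

/-- `id ⊗ T'` acting on `(A ⊗ A) ⊗ A`. -/
noncomputable def Tmap'23 : (A ⊗[K] A) ⊗[K] A →ₗ[K] (A ⊗[K] A) ⊗[K] A :=
  (TensorProduct.assoc K A A A).symm.toLinearMap
  ∘ₗ lTensor A (Tmap' K A)
  ∘ₗ (TensorProduct.assoc K A A A).toLinearMap

open Coalgebra HopfAlgebra WithConv

variable {A} in
/-- The right adjoint action `b ↦ a ◁ b = S(b₍₁₎) a b₍₂₎`, as the convolution product of `S` with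
left multiplication by `a`. -/
noncomputable def adj (a : A) : A →ₗ[K] A :=
  (toConv (antipode K) * toConv (mulLeft K a)).ofConv

variable {K A} in
lemma adj_repr {ι : Type*} (a : A) {b : A} (r : Repr K b ι) :
    adj K a b = ∑ i ∈ r.index, antipode K (r.left i) * (a * r.right i) :=
  r.convMul_apply _ _

variable {A} in
lemma Tmap'_tmul (a b : A) : Tmap' K A (a ⊗ₜ b) = lTensor A (adj K a) (comul b) := by
  have h : adj K a = mulMid K A ∘ₗ TensorProduct.mk K A (A ⊗[K] A) a
      ∘ₗ rTensor A (antipodeL K A) ∘ₗ comul := by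
    ext c
    rw [adj_repr a (ℛ K c)]
    simp [← (ℛ K c).eq, mulMid, antipodeL, mul_assoc]
  rw [h, ← (ℛ K b).eq]
  simp only [Tmap', comul3, LinearMap.comp_apply, lTensor_tmul, map_sum, tmul_sum,
    ← (ℛ K b).eq]
  refine Finset.sum_congr rfl fun i _ => ?_
  rw [← (ℛ K ((ℛ K b).right i)).eq]
  simp [tmul_sum]

variable {A} in
/-- `◁` is a right action of the algebra `A` on itself. -/
lemma adj_adj (a b c : A) : adj K (adj K a b) c = adj K a (b * c) := by
  rw [adj_repr _ (ℛ K c), adj_repr _ (ℛ K b), adj_repr _ ((ℛ K b).mul (ℛ K c))]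
  simp [antipode_mul_antidistrib, Finset.sum_product_right, Finset.sum_mul, Finset.mul_sum,
    mul_assoc]

/-- The inclusion `ι₁ : a ↦ a ⊗ 1`. -/
noncomputable abbrev incl₁ : A →ₐ[K] A ⊗[K] A := Algebra.TensorProduct.includeLeft

/-- The inclusion `ι₂ : a ↦ 1 ⊗ a`. -/
noncomputable abbrev incl₂ : A →ₐ[K] A ⊗[K] A := Algebra.TensorProduct.includeRight

/-- Composition with an algebra map respects convolution products. -/
lemma toConv_comp_mul {B : Type*} [Ring B] [Algebra K B] (h : A →ₐ[K] B)
    (f g : A →ₗ[K] A) :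
    toConv (h.toLinearMap ∘ₗ (toConv f * toConv g).ofConv) =
      toConv (h.toLinearMap ∘ₗ f) * toConv (h.toLinearMap ∘ₗ g) :=
  congrArg toConv (algHom_comp_convMul_distrib h _ _)

/-- For an algebra map `h`, `h ∘ S` is a left convolution inverse of `h`. -/
lemma comp_antipode_mul {B : Type*} [Ring B] [Algebra K B] (h : A →ₐ[K] B) :
    toConv (h.toLinearMap ∘ₗ antipode K) * toConv h.toLinearMap = 1 := by
  have := toConv_comp_mul K A h (antipode K) LinearMap.id
  rw [antipode_mul_id] at this
  rw [LinearMap.comp_id] at this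
  rw [← this]
  ext c
  simp

/-- For an algebra map `h`, `h ∘ S` is a right convolution inverse of `h`. -/
lemma mul_comp_antipode {B : Type*} [Ring B] [Algebra K B] (h : A →ₐ[K] B) :
    toConv h.toLinearMap * toConv (h.toLinearMap ∘ₗ antipode K) = 1 := by
  have := toConv_comp_mul K A h LinearMap.id (antipode K)
  rw [id_mul_antipode] at this
  rw [LinearMap.comp_id] at this
  rw [← this]
  ext c
  simp

variable {A} in
lemma incl₁_mul_incl₂ (x y : A) :
    toConv ((incl₁ K A).toLinearMap ∘ₗ mulLeft K x) *
      toConv ((incl₂ K A).toLinearMap ∘ₗ mulLeft K y) =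
      toConv (mulLeft K (x ⊗ₜ[K] y) ∘ₗ comul) := by
  ext c
  rw [(ℛ K c).convMul_apply]
  simp [← (ℛ K c).eq]

/-- `S(c) ⊗ 1 = (1 ⊗ c₍₁₎) Δ(S(c₍₂₎))`. -/
lemma incl₂_mul_comul_antipode :
    toConv (incl₂ K A).toLinearMap *
      toConv ((Bialgebra.comulAlgHom K A).toLinearMap ∘ₗ antipode K) =
      toConv ((incl₁ K A).toLinearMap ∘ₗ antipode K) := by
  have h : toConv (incl₁ K A).toLinearMap * toConv (incl₂ K A).toLinearMap =
      toConv (Bialgebra.comulAlgHom K A).toLinearMap := by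
    have := incl₁_mul_incl₂ K (1 : A) 1
    simpa [← Algebra.TensorProduct.one_def] using! this
  calc _ = toConv ((incl₁ K A).toLinearMap ∘ₗ antipode K) * toConv (incl₁ K A).toLinearMap *
        toConv (incl₂ K A).toLinearMap *
        toConv ((Bialgebra.comulAlgHom K A).toLinearMap ∘ₗ antipode K) := by
        rw [comp_antipode_mul, one_mul]
    _ = _ := by
        rw [mul_assoc (toConv ((incl₁ K A).toLinearMap ∘ₗ antipode K)), h, mul_assoc,
          mul_comp_antipode, mul_one]

variable {A} in
/-- Convolution form of `(1 ⊗ c₍₁₎) Δ(b ◁ c₍₂₎) = (S(c₍₁₎) ⊗ 1) Δ(b) Δ(c₍₂₎)`. -/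
lemma incl₂_mul_comul_adj (b : A) :
    toConv (incl₂ K A).toLinearMap * toConv (comul ∘ₗ adj K b) =
      toConv ((incl₁ K A).toLinearMap ∘ₗ antipode K) *
        toConv (mulLeft K (comul (R := K) b) ∘ₗ comul) := by
  have h : toConv (comul ∘ₗ adj K b) =
      toConv ((Bialgebra.comulAlgHom K A).toLinearMap ∘ₗ antipode K) *
        toConv (mulLeft K (comul (R := K) b) ∘ₗ comul) := by
    have := toConv_comp_mul K A (Bialgebra.comulAlgHom K A) (antipode K) (mulLeft K b)
    refine Eq.trans this (congrArg _ (congrArg _ ?_))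
    ext c
    simp
  rw [h, ← mul_assoc, incl₂_mul_comul_antipode]

variable {A} in
/-- Convolution form of `(x ◁ c₍₁₎) ⊗ y c₍₂₎ = (S(c₍₁₎) ⊗ 1) (x ⊗ y) Δ(c₍₂₎)`. -/
lemma incl₁_adj_mul (x y : A) :
    toConv ((incl₁ K A).toLinearMap ∘ₗ adj K x) *
      toConv ((incl₂ K A).toLinearMap ∘ₗ mulLeft K y) =
      toConv ((incl₁ K A).toLinearMap ∘ₗ antipode K) *
        toConv (mulLeft K (x ⊗ₜ[K] y) ∘ₗ comul) := by
  rw [adj, toConv_comp_mul, mul_assoc, incl₁_mul_incl₂]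

variable {K A} in
/-- The Yetter–Drinfeld compatibility
`(b ◁ c₍₂₎)₍₁₎ ⊗ c₍₁₎ (b ◁ c₍₂₎)₍₂₎ = (b₍₁₎ ◁ c₍₁₎) ⊗ b₍₂₎ c₍₂₎`. -/
lemma yetterDrinfeld {ι κ : Type*} {b c : A} (r : Repr K b ι) (s : Repr K c κ) :
    ∑ j ∈ s.index, (1 ⊗ₜ[K] s.left j) * comul (R := K) (adj K b (s.right j)) =
      ∑ i ∈ r.index, ∑ j ∈ s.index, adj K (r.left i) (s.left j) ⊗ₜ[K] (r.right i * s.right j) := by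
  have h := congr($(incl₂_mul_comul_adj K b) c)
  rw [s.convMul_apply] at h
  refine Eq.trans h ?_
  have h' (i : ι) := congr($(incl₁_adj_mul K (r.left i) (r.right i)) c)
  simp only [s.convMul_apply] at h' ⊢
  refine Eq.trans ?_ (Finset.sum_congr rfl fun i _ => (h' i).symm.trans ?_)
  · simp [← r.eq, Finset.sum_mul, Finset.mul_sum]
    exact Finset.sum_comm
  · simp

variable {A} in
/-- The identity `(b₍₁₎ ◁ c₍₁₎) ⊗ ((a ◁ b₍₂₎) ◁ c₍₂₎) = T'((a ◁ c₍₁₎) ⊗ (b ◁ c₍₂₎))`: the braid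
equation with the leftmost tensor factor stripped off. -/
lemma Tmap'_adj_adj (a b c : A) :
    ∑ i ∈ (ℛ K b).index, TensorProduct.map (adj K ((ℛ K b).left i))
        (adj K (adj K a ((ℛ K b).right i))) (comul c) =
      Tmap' K A (TensorProduct.map (adj K a) (adj K b) (comul c)) := by
  have h := congrArg (lTensor A (adj K a)) (yetterDrinfeld (ℛ K b) (ℛ K c))
  rw [← (ℛ K c).eq]
  simp only [map_sum, map_tmul, lTensor_tmul, Tmap'_tmul, adj_adj] at h ⊢
  rw [← h]
  refine Finset.sum_congr rfl fun j _ => ?_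
  generalize (ℛ K c).left j = x
  generalize comul (R := K) (adj K b ((ℛ K c).right j)) = t
  induction t with
  | zero => simp
  | add u v hu hv => simp [mul_add, hu, hv]
  | tmul u v => simp [adj_adj]

variable {A} in
/-- Coassociativity in the form both sides of the braid equation use:
`T'(f ⊗ c₍₁₎) ⊗ g(c₍₂₎) = c₍₁₎ ⊗ (f ◁ c₍₂₎) ⊗ g(c₍₃₎)`. -/
lemma sum_Tmap'_tmul (f : A) (g : A →ₗ[K] A) (c : A) :
    ∑ i ∈ (ℛ K c).index, Tmap' K A (f ⊗ₜ (ℛ K c).left i) ⊗ₜ[K] g ((ℛ K c).right i) =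
      ∑ i ∈ (ℛ K c).index, (TensorProduct.assoc K A A A).symm
        ((ℛ K c).left i ⊗ₜ TensorProduct.map (adj K f) g (comul ((ℛ K c).right i))) := by
  have h := congrArg ((TensorProduct.assoc K A A A).symm.toLinearMap ∘ₗ
    TensorProduct.map LinearMap.id (TensorProduct.map (adj K f) g))
    (sum_tmul_tmul_eq (ℛ K c) (fun i => ℛ K ((ℛ K c).left i)) (fun i => ℛ K ((ℛ K c).right i)))
  simp only [map_sum, LinearMap.comp_apply, map_tmul, LinearEquiv.coe_coe,
    assoc_symm_tmul, id_apply] at h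
  simp only [Tmap'_tmul]
  refine Eq.trans ?_ (h.trans ?_)
  · refine Finset.sum_congr rfl fun i _ => ?_
    rw [← (ℛ K ((ℛ K c).left i)).eq]
    simp [sum_tmul]
  · refine Finset.sum_congr rfl fun i _ => ?_
    rw [← (ℛ K ((ℛ K c).right i)).eq]
    simp [tmul_sum]

/-- The braid equation `(T' ⊗ id)(id ⊗ T')(T' ⊗ id) = (id ⊗ T')(T' ⊗ id)(id ⊗ T')`
for `T'(a ⊗ b) = b₍₁₎ ⊗ S(b₍₂₎) a b₍₃₎`, assuming the antipode is bijective. -/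
theorem braid_equation_T'
    (hS : Function.Bijective (antipodeL K A)) :
    Tmap'12 K A ∘ₗ Tmap'23 K A ∘ₗ Tmap'12 K A
      = Tmap'23 K A ∘ₗ Tmap'12 K A ∘ₗ Tmap'23 K A := by
  apply TensorProduct.ext_threefold
  intro a b c
  have hl : Tmap'12 K A (Tmap'23 K A (Tmap'12 K A ((a ⊗ₜ b) ⊗ₜ c))) =
      ∑ j ∈ (ℛ K c).index, (TensorProduct.assoc K A A A).symm ((ℛ K c).left j ⊗ₜ
        ∑ i ∈ (ℛ K b).index, TensorProduct.map (adj K ((ℛ K b).left i))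
          (adj K (adj K a ((ℛ K b).right i))) (comul ((ℛ K c).right j))) := by
    simp only [tmul_sum, map_sum]
    rw [Finset.sum_comm]
    simp only [← sum_Tmap'_tmul]
    simp only [Tmap'12, rTensor_tmul]
    rw [Tmap'_tmul K a b, ← (ℛ K b).eq]
    simp only [map_sum, sum_tmul, lTensor_tmul]
    refine Finset.sum_congr rfl fun i _ => ?_
    simp only [Tmap'23, LinearMap.comp_apply, LinearEquiv.coe_coe, assoc_tmul, lTensor_tmul]
    rw [Tmap'_tmul K _ c, ← (ℛ K c).eq]
    simp [tmul_sum]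
  have hr : Tmap'23 K A (Tmap'12 K A (Tmap'23 K A ((a ⊗ₜ b) ⊗ₜ c))) =
      ∑ j ∈ (ℛ K c).index, (TensorProduct.assoc K A A A).symm ((ℛ K c).left j ⊗ₜ
        Tmap' K A (TensorProduct.map (adj K a) (adj K b) (comul ((ℛ K c).right j)))) := by
    have h : Tmap'12 K A (Tmap'23 K A ((a ⊗ₜ b) ⊗ₜ c)) = _ :=
      Eq.trans ?_ (sum_Tmap'_tmul K a (adj K b) c)
    · rw [h]
      simp [Tmap'23]
    · simp only [Tmap'23, LinearMap.comp_apply, LinearEquiv.coe_coe, assoc_tmul, lTensor_tmul]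
      rw [Tmap'_tmul K _ c, ← (ℛ K c).eq]
      simp [tmul_sum, Tmap'12]
  simp only [LinearMap.comp_apply, hl, hr, Tmap'_adj_adj]

end
end
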